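/- Semi-direct products of line segments factorize if and only if they are fiber products (quadrilateral case, Appendix B): for real parameters a and b, the rational-function identity (1/x − 1/(x + b·y − 1)) · (1/(a·x + y − 1) − 1/y) = (a·x + b·y − 1)/(x·y·(a·x + y − 1)·(x + b·y − 1)) holds for all real x, y with x ≠ 0, y ≠ 0, a·x + y − 1 ≠ 0, and x + b·y − 1 ≠ 0, if and only if a·b = 0. Equivalently: the canonical form of the quadrilateral bounded by x = 0, a·x + y − 1 = 0, x + b·y − 1 = 0, y = 0 (whose numerator/adjoint is 1 − a·x − b·y) factorizes into the product of the canonical forms of its two pairs of opposite facets if and only if one pair of opposite facets is parallel, i.e. the quadrilateral is a trapezoid (fiber-product geometry). -/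

import Mathlib

/-!
Over the common denominator, the product of the two segment forms has numerator
`(b * y - 1) * (1 - a * x) = (a * x + b * y - 1) - a * b * (x * y)`, so at every single point off
the four lines the form factorizes if and only if `a * b = 0`. At `(1, 1)` the four linear forms
take the values `1`, `a`, `b`, `1`, so this point is off the four lines as soon as `a * b ≠ 0`.
-/

section Field

variable {K : Type*} [Field K]

theorem one_div_sub_one_div_mul_one_div_sub_one_div {p q r s : K}
    (hp : p ≠ 0) (hq : q ≠ 0) (hr : r ≠ 0) (hs : s ≠ 0) :
    (1 / p - 1 / q) * (1 / r - 1 / s) = (q - p) * (s - r) / (p * s * r * q) := by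
  field_simp

theorem quadrilateral_factorizes_at_iff {a b x y : K} (hx : x ≠ 0) (hy : y ≠ 0)
    (h₂ : a * x + y - 1 ≠ 0) (h₃ : x + b * y - 1 ≠ 0) :
    (1 / x - 1 / (x + b * y - 1)) * (1 / (a * x + y - 1) - 1 / y)
        = (a * x + b * y - 1) / (x * y * (a * x + y - 1) * (x + b * y - 1))
      ↔ a * b = 0 := by
  have hxy : x * y ≠ 0 := mul_ne_zero hx hy
  have numerator_eq : (x + b * y - 1 - x) * (y - (a * x + y - 1)) =
      (a * x + b * y - 1) - a * b * (x * y) := by ring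
  rw [one_div_sub_one_div_mul_one_div_sub_one_div hx h₃ h₂ hy, numerator_eq,
    div_left_inj' (mul_ne_zero (mul_ne_zero hxy h₂) h₃), sub_eq_self, mul_eq_zero_iff_right hxy]

theorem quadrilateral_factorizes_iff_fiber_general (a b : K) :
    (∀ x y : K, x ≠ 0 → y ≠ 0 → a * x + y - 1 ≠ 0 → x + b * y - 1 ≠ 0 →
        (1 / x - 1 / (x + b * y - 1)) * (1 / (a * x + y - 1) - 1 / y)
          = (a * x + b * y - 1) / (x * y * (a * x + y - 1) * (x + b * y - 1)))
      ↔ a * b = 0 := by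
  refine ⟨fun h ↦ ?_, fun hab x y hx hy h₂ h₃ ↦
    (quadrilateral_factorizes_at_iff hx hy h₂ h₃).mpr hab⟩
  by_contra hab
  have h₂ : a * 1 + 1 - 1 ≠ 0 := by simpa using left_ne_zero_of_mul hab
  have h₃ : 1 + b * 1 - 1 ≠ 0 := by simpa using right_ne_zero_of_mul hab
  exact hab <| (quadrilateral_factorizes_at_iff one_ne_zero one_ne_zero h₂ h₃).mp <|
    h 1 1 one_ne_zero one_ne_zero h₂ h₃

end Field

/-- Semi-direct products of line segments factorize if and only if they are fiber
products (quadrilateral case): the canonical form of the quadrilateral bounded by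
`x = 0`, `a·x + y − 1 = 0`, `x + b·y − 1 = 0`, `y = 0` factorizes into the product
of the canonical forms of its two pairs of opposite facets if and only if
`a·b = 0` (the trapezoid / fiber-product case). -/
theorem quadrilateral_factorizes_iff_fiber (a b : ℝ) :
    (∀ x y : ℝ, x ≠ 0 → y ≠ 0 → a * x + y - 1 ≠ 0 → x + b * y - 1 ≠ 0 →
        (1 / x - 1 / (x + b * y - 1)) * (1 / (a * x + y - 1) - 1 / y)
          = (a * x + b * y - 1) / (x * y * (a * x + y - 1) * (x + b * y - 1)))
      ↔ a * b = 0 :=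
  quadrilateral_factorizes_iff_fiber_general a b
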